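/- Let A₁, A₂, A₃ be hermitian 4×4 complex matrices whose joint numerical range W = W(A₁,A₂,A₃) has dimension 3. Suppose G₁, G₂, G₃ are three mutually distinct one-dimensional faces of W that have a point in common, and at least two of G₁, G₂, G₃ are exposed faces of W. Then G₁ ∩ G₂ ∩ G₃ is a singleton {p} and p is a corner point of W. -/

import Mathlib

open Matrix ComplexOrder

noncomputable section

/-- A density matrix: positive semidefinite with unit trace. -/
def IsDensity {n : Type*} [Fintype n] (ρ : Matrix n n ℂ) : Prop :=
  ρ.PosSemidef ∧ ρ.trace = 1

/-- The measurement map `ρ ↦ (tr ρA₁, …, tr ρA_k)` (the traces are real for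
hermitian matrices). -/
def wpt {n : Type*} [Fintype n] {k : ℕ} (A : Fin k → Matrix n n ℂ)
    (ρ : Matrix n n ℂ) : Fin k → ℝ :=
  fun i => ((ρ * A i).trace).re

/-- The joint numerical range of `k` matrices. -/
def JNR {n : Type*} [Fintype n] {k : ℕ} (A : Fin k → Matrix n n ℂ) :
    Set (Fin k → ℝ) :=
  wpt A '' {ρ | IsDensity ρ}

/-- `F` is a face of the convex set `C`: a convex subset such that whenever an
open segment between two points of `C` meets `F`, both endpoints lie in `F`. -/
def IsFaceOf {E : Type*} [AddCommGroup E] [Module ℝ E] (C F : Set E) : Prop :=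
  Convex ℝ F ∧ IsExtreme ℝ C F

/-- The dimension of a convex set: the dimension of its affine hull. -/
def convDim {E : Type*} [AddCommGroup E] [Module ℝ E] (F : Set E) : ℕ :=
  Module.finrank ℝ (affineSpan ℝ F).direction

/-- Euclidean dot product on `Fin d → ℝ`. -/
def dotR {d : ℕ} (u v : Fin d → ℝ) : ℝ := ∑ i, u i * v i

/-- `F` is an exposed face of `C`: the set of minimizers of a linear functional. -/
def IsExposedFace {d : ℕ} (C F : Set (Fin d → ℝ)) : Prop :=
  ∃ u : Fin d → ℝ, F = {x ∈ C | ∀ y ∈ C, dotR u x ≤ dotR u y}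

/-- The normal cone of `C` at `p`. -/
def normalConeAt {d : ℕ} (C : Set (Fin d → ℝ)) (p : Fin d → ℝ) :
    Set (Fin d → ℝ) :=
  {u | ∀ y ∈ C, 0 ≤ dotR (y - p) u}

/-- `p` is a corner point of `C` if the normal cone of `C` at `p` spans `ℝ^d`. -/
def IsCornerPoint {d : ℕ} (C : Set (Fin d → ℝ)) (p : Fin d → ℝ) : Prop :=
  p ∈ C ∧ Submodule.span ℝ (normalConeAt C p) = ⊤

/-- The closed unit disk of `ℝ²`. -/
def unitDisk2 : Set (Fin 2 → ℝ) := {v | v 0 ^ 2 + v 1 ^ 2 ≤ 1}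

/-- An elliptic disk in `ℝ³`: the image of the closed unit disk of `ℝ²` under an
injective affine map. -/
def IsEllipticDisk (F : Set (Fin 3 → ℝ)) : Prop :=
  ∃ f : (Fin 2 → ℝ) →ᵃ[ℝ] (Fin 3 → ℝ), Function.Injective f ∧ F = f '' unitDisk2

/-- A non-elliptic face of `W`: a two-dimensional face that is not an elliptic
disk. -/
def IsNonEllipticFace (W F : Set (Fin 3 → ℝ)) : Prop :=
  IsFaceOf W F ∧ convDim F = 2 ∧ ¬ IsEllipticDisk F

/-- A rank-3 face of the joint numerical range of `A`. -/
def IsRank3Face {k : ℕ} (A : Fin k → Matrix (Fin 4) (Fin 4) ℂ)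
    (F : Set (Fin k → ℝ)) : Prop :=
  F.Nonempty ∧ IsFaceOf (JNR A) F ∧
    ∃ P : Matrix (Fin 4) (Fin 4) ℂ, Pᴴ = P ∧ P * P = P ∧ P.rank = 3 ∧
      ∀ ρ : Matrix (Fin 4) (Fin 4) ℂ, IsDensity ρ → (wpt A ρ ∈ F ↔ P * ρ * P = ρ)

theorem aux_line (C G G' : Set (Fin 3 → ℝ)) (hG : IsFaceOf C G) (hd : convDim G = 1)
    (hG' : IsFaceOf C G') (p x : Fin 3 → ℝ) (hp : p ∈ G) (hp' : p ∈ G')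
    (hx : x ∈ G) (hx' : x ∈ G') (hne : x ≠ p) : G ⊆ G' := by
  have hc : Collinear ℝ G := by
    rw [collinear_iff_finrank_le_one, ← direction_affineSpan]
    exact hd.le
  obtain ⟨v, hv⟩ := (collinear_iff_of_mem hp).1 hc
  obtain ⟨r, hr⟩ := hv x hx
  have hr0 : r ≠ 0 := by
    rintro rfl
    apply hne
    simpa using hr
  intro y hy
  obtain ⟨s, hs⟩ := hv y hy
  have hy' : y = p + (s / r) • (x - p) := by
    rw [hs, hr]
    ext i
    simp
    field_simp
    ring
  generalize s / r = t at hy'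
  have hyC := hG.2.1 hy
  have hxC := hG.2.1 hx
  have hpC := hG.2.1 hp
  rcases lt_or_ge t 0 with h0 | h0
  · refine hG'.2.2 hyC hxC hp' ?_
    have h1 : 0 < 1 - t := by linarith
    refine ⟨1 / (1 - t), -t / (1 - t), by positivity, div_pos (by linarith) h1, by field_simp; ring, ?_⟩
    rw [hy']
    ext i
    simp
    field_simp
    ring
  · rcases le_or_gt t 1 with h1 | h1
    · refine hG'.1 hp' hx' (sub_nonneg.2 h1) h0 (by ring) |> fun h => ?_
      convert h using 1
      rw [hy']
      ext i
      simp
      ring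
    · have ht : 0 < t := by linarith
      refine hG'.2.2 hyC hpC hx' ?_
      refine ⟨1 / t, (t - 1) / t, by positivity, div_pos (by linarith) ht, by field_simp; ring, ?_⟩
      rw [hy']
      ext i
      simp
      field_simp
      ring

theorem aux_inter (C G G' : Set (Fin 3 → ℝ)) (hG : IsFaceOf C G) (hd : convDim G = 1)
    (hG' : IsFaceOf C G') (hd' : convDim G' = 1) (h : G ≠ G') (p x : Fin 3 → ℝ)
    (hp : p ∈ G) (hp' : p ∈ G') (hx : x ∈ G) (hx' : x ∈ G') : x = p := by
  by_contra hne
  exact h ((aux_line C G G' hG hd hG' p x hp hp' hx hx' hne).antisymm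
    (aux_line C G' G hG' hd' hG p x hp' hp hx' hx hne))

theorem aux_other (G : Set (Fin 3 → ℝ)) (hd : convDim G = 1) (p : Fin 3 → ℝ) :
    ∃ q ∈ G, q ≠ p := by
  by_contra! h
  have hs : G.Subsingleton := fun a ha b hb => (h a ha).trans (h b hb).symm
  unfold convDim at hd
  rw [direction_affineSpan, (vectorSpan_eq_bot_iff_subsingleton ℝ).2 hs] at hd
  simp at hd

theorem dotR_add {d : ℕ} (u v w : Fin d → ℝ) : dotR (u + v) w = dotR u w + dotR v w := by
  simp [dotR, add_mul, Finset.sum_add_distrib]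

theorem dotR_sub {d : ℕ} (u v w : Fin d → ℝ) : dotR (u - v) w = dotR u w - dotR v w := by
  simp [dotR, sub_mul, Finset.sum_sub_distrib]

theorem dotR_smul {d : ℕ} (c : ℝ) (v w : Fin d → ℝ) : dotR (c • v) w = c * dotR v w := by
  simp [dotR, Finset.mul_sum, mul_assoc]

theorem dotR_comm {d : ℕ} (v w : Fin d → ℝ) : dotR v w = dotR w v := by
  simp [dotR, mul_comm]

theorem aux_support (C G : Set (Fin 3 → ℝ)) (hC : Convex ℝ C) (hdim : convDim C = 3)
    (hG : IsFaceOf C G) (hd : convDim G = 1) (m : Fin 3 → ℝ) (hm : m ∈ G) :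
    ∃ u : Fin 3 → ℝ, u ≠ 0 ∧ ∀ y ∈ C, dotR u m ≤ dotR u y := by
  have hne : C.Nonempty := ⟨m, hG.2.1 hm⟩
  have hint : (interior C).Nonempty := by
    rw [hC.interior_nonempty_iff_affineSpan_eq_top]
    rw [← AffineSubspace.direction_eq_top_iff_of_nonempty ((affineSpan_nonempty ℝ).2 hne)]
    apply Submodule.eq_top_of_finrank_eq
    unfold convDim at hdim
    rw [hdim]
    simp
  have hmi : m ∉ interior C := by
    intro hmi
    have hsub : C ⊆ G := by
      intro y hy
      have hcont : Filter.Tendsto (fun e : ℝ => m - e • (y - m)) (nhds 0) (nhds m) := by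
        have : Continuous (fun e : ℝ => m - e • (y - m)) := by fun_prop
        simpa using this.tendsto 0
      have hev := hcont.eventually (mem_interior_iff_mem_nhds.1 hmi)
      obtain ⟨e, he, hepos⟩ := ((hev.filter_mono nhdsWithin_le_nhds).and
        (self_mem_nhdsWithin : Set.Ioi (0:ℝ) ∈ nhdsWithin 0 (Set.Ioi 0))).exists
      have hepos : 0 < e := hepos
      refine hG.2.2 hy he hm ?_
      refine ⟨e / (1 + e), 1 / (1 + e), by positivity, by positivity, by field_simp; ring, ?_⟩
      ext i
      simp
      field_simp
      ring
    have : C = G := hsub.antisymm hG.2.1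
    rw [this] at hdim
    omega
  obtain ⟨f, hf⟩ := geometric_hahn_banach_open_point hC.interior isOpen_interior hmi
  have hfd : ∀ x, dotR (fun i => -f (Pi.single i 1)) x = - f x := by
    intro x
    conv_rhs => rw [pi_eq_sum_univ' x]
    simp [dotR, map_sum, mul_comm]
  refine ⟨fun i => -f (Pi.single i 1), ?_, ?_⟩
  · intro h0
    obtain ⟨z, hz⟩ := hint
    have h1 := hf z hz
    have h2 := hfd z
    have h3 := hfd m
    rw [h0] at h2 h3
    simp [dotR] at h2 h3
    linarith
  · intro y hy
    rw [hfd, hfd]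
    have hcl : y ∈ closure (interior C) := by
      rw [hC.closure_interior_eq_closure_of_nonempty_interior hint]
      exact subset_closure hy
    have : closure (interior C) ⊆ {x | f x ≤ f m} :=
      closure_minimal (fun x hx => (hf x hx).le) (isClosed_le (by fun_prop) (by fun_prop))
    have := this hcl
    simp at this
    linarith

theorem aux_main (C : Set (Fin 3 → ℝ)) (hC : Convex ℝ C) (hdim : convDim C = 3)
    (G₁ G₂ G₃ : Set (Fin 3 → ℝ))
    (hG₁ : IsFaceOf C G₁) (hd₁ : convDim G₁ = 1)
    (hG₂ : IsFaceOf C G₂) (hd₂ : convDim G₂ = 1)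
    (hG₃ : IsFaceOf C G₃) (hd₃ : convDim G₃ = 1)
    (h12 : G₁ ≠ G₂) (h13 : G₁ ≠ G₃) (h23 : G₂ ≠ G₃)
    (he₁ : IsExposedFace C G₁) (he₂ : IsExposedFace C G₂)
    (p : Fin 3 → ℝ) (hp₁ : p ∈ G₁) (hp₂ : p ∈ G₂) (hp₃ : p ∈ G₃) :
    G₁ ∩ G₂ ∩ G₃ = {p} ∧ IsCornerPoint C p := by
  have hpC := hG₁.2.1 hp₁
  refine ⟨?_, hpC, ?_⟩
  · apply Set.Subset.antisymm
    · rintro x ⟨⟨hx1, hx2⟩, -⟩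
      exact aux_inter C G₁ G₂ hG₁ hd₁ hG₂ hd₂ h12 p x hp₁ hp₂ hx1 hx2
    · rintro x rfl
      exact ⟨⟨hp₁, hp₂⟩, hp₃⟩
  obtain ⟨q₁, hq₁, hq₁p⟩ := aux_other G₁ hd₁ p
  obtain ⟨q₂, hq₂, hq₂p⟩ := aux_other G₂ hd₂ p
  obtain ⟨q₃, hq₃, hq₃p⟩ := aux_other G₃ hd₃ p
  have pos : ∀ (G : Set (Fin 3 → ℝ)) (u q : Fin 3 → ℝ),
      G = {x ∈ C | ∀ y ∈ C, dotR u x ≤ dotR u y} → p ∈ G → q ∈ C → q ∉ G →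
      dotR u p < dotR u q := by
    rintro G u q rfl hpG hq hqG
    by_contra! hle
    exact hqG ⟨hq, fun y hy => hle.trans (hpG.2 y hy)⟩
  have zer : ∀ (G : Set (Fin 3 → ℝ)) (u q : Fin 3 → ℝ),
      G = {x ∈ C | ∀ y ∈ C, dotR u x ≤ dotR u y} → p ∈ G → q ∈ G →
      dotR u q = dotR u p := by
    rintro G u q rfl hpG hqG
    exact le_antisymm (hqG.2 _ hpG.1) (hpG.2 _ hqG.1)
  obtain ⟨u₁, hu₁⟩ := he₁
  obtain ⟨u₂, hu₂⟩ := he₂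
  have a13 := pos G₁ u₁ q₃ hu₁ hp₁ (hG₃.2.1 hq₃) (fun h => hq₃p
    (aux_inter C G₁ G₃ hG₁ hd₁ hG₃ hd₃ h13 p q₃ hp₁ hp₃ h hq₃))
  have a12 := pos G₁ u₁ q₂ hu₁ hp₁ (hG₂.2.1 hq₂) (fun h => hq₂p
    (aux_inter C G₁ G₂ hG₁ hd₁ hG₂ hd₂ h12 p q₂ hp₁ hp₂ h hq₂))
  have a21 := pos G₂ u₂ q₁ hu₂ hp₂ (hG₁.2.1 hq₁) (fun h => hq₁p
    (aux_inter C G₁ G₂ hG₁ hd₁ hG₂ hd₂ h12 p q₁ hp₁ hp₂ hq₁ h))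
  have a23 := pos G₂ u₂ q₃ hu₂ hp₂ (hG₃.2.1 hq₃) (fun h => hq₃p
    (aux_inter C G₂ G₃ hG₂ hd₂ hG₃ hd₃ h23 p q₃ hp₂ hp₃ h hq₃))
  have a11 := zer G₁ u₁ q₁ hu₁ hp₁ hq₁
  have a22 := zer G₂ u₂ q₂ hu₂ hp₂ hq₂
  have hmid : (1/2 : ℝ) • p + (1/2 : ℝ) • q₃ ∈ G₃ :=
    hG₃.1 hp₃ hq₃ (by norm_num) (by norm_num) (by norm_num)
  obtain ⟨u, hu0, hu⟩ := aux_support C G₃ hC hdim hG₃ hd₃ _ hmid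
  have hmv : dotR u ((1/2 : ℝ) • p + (1/2 : ℝ) • q₃) = 1/2 * dotR u p + 1/2 * dotR u q₃ := by
    rw [dotR_comm, dotR_add, dotR_smul, dotR_smul, dotR_comm p, dotR_comm q₃]
  rw [hmv] at hu
  have b1 := hu p hpC
  have b2 := hu q₃ (hG₃.2.1 hq₃)
  have b3 : dotR u q₃ = dotR u p := by linarith
  have hu' : ∀ y ∈ C, dotR u p ≤ dotR u y := fun y hy => by
    have := hu y hy
    linarith
  have hN : ∀ w : Fin 3 → ℝ, (∀ y ∈ C, dotR w p ≤ dotR w y) → w ∈ normalConeAt C p := by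
    intro w hw y hy
    rw [dotR_sub, dotR_comm y, dotR_comm p]
    linarith [hw y hy]
  have n1 : u₁ ∈ normalConeAt C p := by
    rw [hu₁] at hp₁
    exact hN _ hp₁.2
  have n2 : u₂ ∈ normalConeAt C p := by
    rw [hu₂] at hp₂
    exact hN _ hp₂.2
  have n3 := hN u hu'
  have c1 := hu' q₁ (hG₁.2.1 hq₁)
  have c2 := hu' q₂ (hG₂.2.1 hq₂)
  have hli : LinearIndependent ℝ ![u₁, u₂, u] := by
    rw [Fintype.linearIndependent_iff]
    intro g hg
    rw [Fin.sum_univ_three] at hg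
    simp only [Matrix.cons_val] at hg
    have key : ∀ x, g 0 * dotR u₁ x + g 1 * dotR u₂ x + g 2 * dotR u x = 0 := by
      intro x
      rw [← dotR_smul, ← dotR_smul, ← dotR_smul, ← dotR_add, ← dotR_add, hg]
      simp [dotR]
    have kp := key p
    have k1 := key q₁
    have k2 := key q₂
    have k3 := key q₃
    have e1 : g 1 * (dotR u₂ q₁ - dotR u₂ p) + g 2 * (dotR u q₁ - dotR u p) = 0 := by
      rw [a11] at k1; linarith
    have e2 : g 0 * (dotR u₁ q₂ - dotR u₁ p) + g 2 * (dotR u q₂ - dotR u p) = 0 := by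
      rw [a22] at k2; linarith
    have e3 : g 0 * (dotR u₁ q₃ - dotR u₁ p) + g 1 * (dotR u₂ q₃ - dotR u₂ p) = 0 := by
      rw [b3] at k3; linarith
    have d13 := sub_pos.2 a13
    have d12 := sub_pos.2 a12
    have d21 := sub_pos.2 a21
    have d23 := sub_pos.2 a23
    have d1 := sub_nonneg.2 c1
    have d2 := sub_nonneg.2 c2
    have hz : g 0 = 0 ∧ g 1 = 0 := by
      rcases lt_trichotomy (g 0) 0 with h | h | h
      · exfalso
        have : 0 < g 1 := by
          by_contra! h'
          nlinarith
        have : 0 < g 2 := by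
          by_contra! h'
          nlinarith
        nlinarith [mul_pos ‹0 < g 1› d21, mul_nonneg this.le d1]
      · refine ⟨h, ?_⟩
        rw [h] at e3
        have : g 1 * (dotR u₂ q₃ - dotR u₂ p) = 0 := by linarith
        exact (mul_eq_zero.1 this).resolve_right d23.ne'
      · exfalso
        have : g 1 < 0 := by
          by_contra! h'
          nlinarith
        have : 0 < g 2 := by
          by_contra! h'
          nlinarith
        nlinarith [mul_pos h d12, mul_nonneg this.le d2]
    rw [hz.1, hz.2] at hg
    have h2 : g 2 = 0 := by
      simpa [hu0] using hg
    intro i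
    fin_cases i
    · exact hz.1
    · exact hz.2
    · exact h2
  have htop := hli.span_eq_top_of_card_eq_finrank (by simp)
  rw [eq_top_iff, ← htop]
  apply Submodule.span_mono
  rintro _ ⟨i, rfl⟩
  fin_cases i
  · exact n1
  · exact n2
  · exact n3

theorem JNR_convex (A : Fin 3 → Matrix (Fin 4) (Fin 4) ℂ) : Convex ℝ (JNR A) := by
  rintro _ ⟨r, hr, rfl⟩ _ ⟨s, hs, rfl⟩ a b ha hb hab
  refine ⟨(a : ℂ) • r + (b : ℂ) • s, ⟨?_, ?_⟩, ?_⟩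
  · exact (hr.1.smul (by exact_mod_cast ha)).add (hs.1.smul (by exact_mod_cast hb))
  · rw [Matrix.trace_add, Matrix.trace_smul, Matrix.trace_smul, hr.2, hs.2]
    simp only [smul_eq_mul, mul_one]
    exact_mod_cast hab
  · ext i
    simp [wpt, add_mul, Matrix.trace_add, Matrix.trace_smul]

/-- if three mutually distinct one-dimensional faces of `W`, at
least two of which are exposed, have a point in common, then their intersection
is a corner point of `W`. -/
theorem stmt5 (A : Fin 3 → Matrix (Fin 4) (Fin 4) ℂ)
    (hA : ∀ i, (A i).IsHermitian)
    (hdim : convDim (JNR A) = 3)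
    (G₁ G₂ G₃ : Set (Fin 3 → ℝ))
    (hG₁ : IsFaceOf (JNR A) G₁) (hd₁ : convDim G₁ = 1)
    (hG₂ : IsFaceOf (JNR A) G₂) (hd₂ : convDim G₂ = 1)
    (hG₃ : IsFaceOf (JNR A) G₃) (hd₃ : convDim G₃ = 1)
    (h12 : G₁ ≠ G₂) (h13 : G₁ ≠ G₃) (h23 : G₂ ≠ G₃)
    (hexp : (IsExposedFace (JNR A) G₁ ∧ IsExposedFace (JNR A) G₂) ∨
            (IsExposedFace (JNR A) G₁ ∧ IsExposedFace (JNR A) G₃) ∨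
            (IsExposedFace (JNR A) G₂ ∧ IsExposedFace (JNR A) G₃))
    (hne : (G₁ ∩ G₂ ∩ G₃).Nonempty) :
    ∃ p, G₁ ∩ G₂ ∩ G₃ = {p} ∧ IsCornerPoint (JNR A) p := by
  obtain ⟨p, ⟨hp₁, hp₂⟩, hp₃⟩ := hne
  have hC := JNR_convex A
  refine ⟨p, ?_⟩
  rcases hexp with ⟨e, e'⟩ | ⟨e, e'⟩ | ⟨e, e'⟩
  · exact aux_main _ hC hdim G₁ G₂ G₃ hG₁ hd₁ hG₂ hd₂ hG₃ hd₃ h12 h13 h23 e e' p hp₁ hp₂ hp₃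
  · rw [Set.inter_right_comm]
    exact aux_main _ hC hdim G₁ G₃ G₂ hG₁ hd₁ hG₃ hd₃ hG₂ hd₂ h13 h12 h23.symm e e' p hp₁ hp₃ hp₂
  · rw [Set.inter_assoc, Set.inter_comm]
    exact aux_main _ hC hdim G₂ G₃ G₁ hG₂ hd₂ hG₃ hd₃ hG₁ hd₁ h23 h12.symm h13.symm e e' p
      hp₂ hp₃ hp₁
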